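/- Let θ > 0 and μ ∈ ℝ, let ζ : [0,∞) → ℝ be a continuous function with ζ_0 = 0 that converges to a limit ζ_∞ as t → ∞ with μ + ζ_∞ ≠ 0, and define X_t = μ(e^{θt} − 1) + e^{θt} ζ_t for t ≥ 0. Define the least-squares-type estimator θ̃_T = ( (1/2) T X_T² − X_T ∫₀^T X_s ds ) / ( T ∫₀^T X_s² ds − (∫₀^T X_s ds)² ). Then θ̃_T → θ as T → ∞ (in particular the denominator is nonzero for all T large enough). -/

import Mathlib

open MeasureTheory Filter Set

/-!
The process satisfies `X t ~ c * exp (θ * t)` with `c = μ + ζinf ≠ 0`, and such an equivalence can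
be integrated: `∫ X ~ (c / θ) * exp (θ * T)` and `∫ X ^ 2 ~ (c ^ 2 / (2 * θ)) * exp (2 * θ * T)`.
In the numerator and in the denominator of the estimator the term carrying the factor `T` therefore
dominates, and the estimator is equivalent to `(c ^ 2 / 2) / (c ^ 2 / (2 * θ)) = θ`.
-/

open Asymptotics Topology

section Integral

variable {E F : Type*} [NormedAddCommGroup E] [NormedSpace ℝ E] [NormedAddCommGroup F]

theorem intervalIntegrable_of_locallyIntegrableOn_Ici {f : ℝ → F} {a b c : ℝ} {ν : Measure ℝ}
    (hf : LocallyIntegrableOn f (Ici a) ν) (hb : a ≤ b) (hc : a ≤ c) :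
    IntervalIntegrable f ν b c :=
  (hf.integrableOn_compact_subset
    (fun _ hx => (le_inf hb hc).trans hx.1) isCompact_uIcc).intervalIntegrable

theorem isLittleO_intervalIntegral_atTop {f : ℝ → E} {g : ℝ → F} {a : ℝ} {ν : Measure ℝ}
    (hf : LocallyIntegrableOn f (Ici a) ν) (hg : LocallyIntegrableOn g (Ici a) ν)
    (hfg : f =o[atTop] g) (hg_top : Tendsto (fun T => ∫ s in a..T, ‖g s‖ ∂ν) atTop atTop) :
    (fun T => ∫ s in a..T, f s ∂ν) =o[atTop] fun T => ∫ s in a..T, ‖g s‖ ∂ν := by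
  refine isLittleO_iff.2 fun ε hε => ?_
  obtain ⟨N, hN, hbound⟩ : ∃ N ≥ a, ∀ s ≥ N, ‖f s‖ ≤ ε / 2 * ‖g s‖ :=
    ((eventually_ge_atTop a).and
      (eventually_forall_ge_atTop.2 (hfg.bound (half_pos hε)))).exists
  have hf_int {b c : ℝ} (hb : a ≤ b) (hc : a ≤ c) : IntervalIntegrable f ν b c :=
    intervalIntegrable_of_locallyIntegrableOn_Ici hf hb hc
  have hg_int {b c : ℝ} (hb : a ≤ b) (hc : a ≤ c) : IntervalIntegrable (fun s => ‖g s‖) ν b c :=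
    intervalIntegrable_of_locallyIntegrableOn_Ici hg.norm hb hc
  filter_upwards [eventually_ge_atTop N,
    (hg_top.const_mul_atTop (half_pos hε)).eventually_ge_atTop ‖∫ s in a..N, f s ∂ν‖]
    with T hNT hhead
  have haT : a ≤ T := hN.trans hNT
  have htail : ‖∫ s in N..T, f s ∂ν‖ ≤ ε / 2 * ∫ s in a..T, ‖g s‖ ∂ν := calc
    ‖∫ s in N..T, f s ∂ν‖ ≤ ∫ s in N..T, ε / 2 * ‖g s‖ ∂ν :=
      intervalIntegral.norm_integral_le_of_norm_le hNT
        (ae_of_all _ fun s hs => hbound s hs.1.le) ((hg_int hN haT).const_mul _)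
    _ = ε / 2 * ∫ s in N..T, ‖g s‖ ∂ν := intervalIntegral.integral_const_mul _ _
    _ ≤ ε / 2 * ∫ s in a..T, ‖g s‖ ∂ν := by
      gcongr
      exact intervalIntegral.integral_mono_interval hN hNT le_rfl
        (ae_of_all _ fun s => norm_nonneg (g s)) (hg_int le_rfl haT)
  calc
    ‖∫ s in a..T, f s ∂ν‖ = ‖(∫ s in a..N, f s ∂ν) + ∫ s in N..T, f s ∂ν‖ := by
      rw [intervalIntegral.integral_add_adjacent_intervals (hf_int le_rfl hN) (hf_int hN haT)]
    _ ≤ ‖∫ s in a..N, f s ∂ν‖ + ‖∫ s in N..T, f s ∂ν‖ := norm_add_le _ _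
    _ ≤ ε * ∫ s in a..T, ‖g s‖ ∂ν := by linarith
    _ ≤ ε * ‖∫ s in a..T, ‖g s‖ ∂ν‖ := by gcongr; exact Real.le_norm_self _

end Integral

section Asymptotics

variable {α E : Type*} {l : Filter α} [NormedAddCommGroup E] [NormedSpace ℝ E]

theorem isBigO_of_isEquivalent_smul_const {f : α → E} {g : α → ℝ} {c : E}
    (h : f ~[l] fun t => g t • c) : f =O[l] g := by
  simpa only [smul_eq_mul, mul_one] using
    h.isBigO.trans ((isBigO_refl g l).smul (isBigO_const_const c (one_ne_zero (α := ℝ)) l))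

theorem isBigO_smul_const_self (g : α → ℝ) {c : E} (hc : c ≠ 0) :
    g =O[l] fun t => g t • c := by
  simpa only [smul_eq_mul, mul_one] using
    (isBigO_refl g l).smul (isBigO_const_const (1 : ℝ) hc l)

theorem isLittleO_id_smul_atTop (u : ℝ → E) : u =o[atTop] fun T => T • u T := by
  simpa only [one_smul, id] using
    (isLittleO_const_id_atTop (1 : ℝ)).smul_isBigO (isBigO_refl u atTop)

end Asymptotics

section Exponential

variable {a : ℝ}

theorem exp_mul_sq (a t : ℝ) : Real.exp (a * t) ^ 2 = Real.exp (2 * a * t) := by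
  rw [← Real.exp_nat_mul, Nat.cast_ofNat, mul_assoc]

theorem tendsto_exp_mul_atTop (ha : 0 < a) :
    Tendsto (fun t => Real.exp (a * t)) atTop atTop :=
  Real.tendsto_exp_atTop.comp (tendsto_id.const_mul_atTop ha)

theorem isEquivalent_integral_exp_mul (ha : 0 < a) (b : ℝ) :
    (fun T => ∫ s in b..T, Real.exp (a * s)) ~[atTop] fun T => Real.exp (a * T) * a⁻¹ := by
  have hint (T : ℝ) :
      ∫ s in b..T, Real.exp (a * s) = Real.exp (a * T) * a⁻¹ + -(Real.exp (a * b) * a⁻¹) := by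
    rw [intervalIntegral.integral_comp_mul_left _ ha.ne', integral_exp, smul_eq_mul]
    ring
  simp_rw [hint]
  exact IsEquivalent.refl.add_const_of_norm_tendsto_atTop
    (tendsto_norm_atTop_atTop.comp ((tendsto_exp_mul_atTop ha).atTop_mul_const (inv_pos.2 ha)))

theorem isEquivalent_integral_of_isEquivalent_exp_smul {E : Type*} [NormedAddCommGroup E]
    [NormedSpace ℝ E] [CompleteSpace E] {f : ℝ → E} {b : ℝ} {c : E} (ha : 0 < a) (hc : c ≠ 0)
    (hf : LocallyIntegrableOn f (Ici b)) (h : f ~[atTop] fun t => Real.exp (a * t) • c) :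
    (fun T => ∫ s in b..T, f s) ~[atTop] fun T => Real.exp (a * T) • a⁻¹ • c := by
  have hexp_int : LocallyIntegrableOn (fun t => Real.exp (a * t)) (Ici b) :=
    ContinuousOn.locallyIntegrableOn (by fun_prop) measurableSet_Ici
  have hexpc_int : LocallyIntegrableOn (fun t => Real.exp (a * t) • c) (Ici b) :=
    ContinuousOn.locallyIntegrableOn (by fun_prop) measurableSet_Ici
  have hexp_equiv := isEquivalent_integral_exp_mul ha b
  have hexp_top : Tendsto (fun T => ∫ s in b..T, ‖Real.exp (a * s)‖) atTop atTop := by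
    simpa only [Real.norm_eq_abs, Real.abs_exp] using
      hexp_equiv.symm.tendsto_atTop ((tendsto_exp_mul_atTop ha).atTop_mul_const (inv_pos.2 ha))
  have herror : (fun T => ∫ s in b..T, (f s - Real.exp (a * s) • c)) =o[atTop]
      fun T => Real.exp (a * T) • a⁻¹ • c := by
    have h := isLittleO_intervalIntegral_atTop (hf.sub hexpc_int) hexp_int
      (h.isLittleO.trans_isBigO (isBigO_of_isEquivalent_smul_const .refl)) hexp_top
    simp only [Real.norm_eq_abs, Real.abs_exp] at h
    exact h.trans_isBigO <| (isBigO_of_isEquivalent_smul_const hexp_equiv).trans <|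
      isBigO_smul_const_self _ (smul_ne_zero (inv_ne_zero ha.ne') hc)
  have hmain := hexp_equiv.smul (IsEquivalent.refl (u := fun _ => c))
  simp only [mul_smul] at hmain
  refine (hmain.add_isLittleO herror).congr_left ?_
  filter_upwards [eventually_ge_atTop b] with T hT
  rw [Pi.add_apply, intervalIntegral.integral_sub
    (intervalIntegrable_of_locallyIntegrableOn_Ici hf le_rfl hT)
    (intervalIntegrable_of_locallyIntegrableOn_Ici hexpc_int le_rfl hT),
    intervalIntegral.integral_smul_const, add_sub_cancel]

end Exponential

section Estimator

variable {θ c : ℝ} {X : ℝ → ℝ}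

theorem isEquivalent_sq_of_isEquivalent_exp_mul (hX : X ~[atTop] fun t => Real.exp (θ * t) * c) :
    (fun t => X t ^ 2) ~[atTop] fun t => Real.exp (2 * θ * t) * c ^ 2 := by
  simpa only [Pi.pow_def, mul_pow, exp_mul_sq] using hX.pow 2

theorem isEquivalent_thetaEstimator_num (hθ : 0 < θ) (hc : c ≠ 0)
    (hX_int : LocallyIntegrableOn X (Ici 0)) (hX : X ~[atTop] fun t => Real.exp (θ * t) * c) :
    (fun T => 1 / 2 * T * X T ^ 2 - X T * ∫ s in (0 : ℝ)..T, X s) ~[atTop]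
      fun T => T * (Real.exp (2 * θ * T) * (c ^ 2 / 2)) := by
  have hmain : (fun T => 1 / 2 * T * X T ^ 2) ~[atTop]
      fun T => T * (Real.exp (2 * θ * T) * (c ^ 2 / 2)) := by
    have h := (IsEquivalent.refl (u := fun T : ℝ => 1 / 2 * T)).mul
      (isEquivalent_sq_of_isEquivalent_exp_mul hX)
    refine h.congr_right (.of_forall fun T => ?_)
    rw [Pi.mul_apply]
    ring
  have hintegral : (fun T => ∫ s in (0 : ℝ)..T, X s) =O[atTop] fun T => Real.exp (θ * T) :=
    isBigO_of_isEquivalent_smul_const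
      (isEquivalent_integral_of_isEquivalent_exp_smul hθ hc hX_int hX)
  have hcross : (fun T => X T * ∫ s in (0 : ℝ)..T, X s) =O[atTop]
      fun T => Real.exp (2 * θ * T) := by
    simpa only [← sq, exp_mul_sq] using
      (isBigO_of_isEquivalent_smul_const hX).mul hintegral
  refine hmain.sub_isLittleO (IsBigO.trans_isLittleO ?_ (isLittleO_id_smul_atTop _))
  exact hcross.trans (isBigO_smul_const_self _ (by positivity))

theorem isEquivalent_thetaEstimator_den (hθ : 0 < θ) (hc : c ≠ 0)
    (hX_int : LocallyIntegrableOn X (Ici 0))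
    (hX_sq_int : LocallyIntegrableOn (fun t => X t ^ 2) (Ici 0))
    (hX : X ~[atTop] fun t => Real.exp (θ * t) * c) :
    (fun T => T * (∫ s in (0 : ℝ)..T, X s ^ 2) - (∫ s in (0 : ℝ)..T, X s) ^ 2) ~[atTop]
      fun T => T * (Real.exp (2 * θ * T) * ((2 * θ)⁻¹ * c ^ 2)) := by
  have hmain : (fun T => T * ∫ s in (0 : ℝ)..T, X s ^ 2) ~[atTop]
      fun T => T * (Real.exp (2 * θ * T) * ((2 * θ)⁻¹ * c ^ 2)) :=
    IsEquivalent.refl.mul (isEquivalent_integral_of_isEquivalent_exp_smul (by positivity)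
      (by positivity) hX_sq_int (isEquivalent_sq_of_isEquivalent_exp_mul hX))
  have hintegral : (fun T => ∫ s in (0 : ℝ)..T, X s) =O[atTop] fun T => Real.exp (θ * T) :=
    isBigO_of_isEquivalent_smul_const
      (isEquivalent_integral_of_isEquivalent_exp_smul hθ hc hX_int hX)
  have hsq : (fun T => (∫ s in (0 : ℝ)..T, X s) ^ 2) =O[atTop]
      fun T => Real.exp (2 * θ * T) := by
    simpa only [exp_mul_sq] using hintegral.pow 2
  refine hmain.sub_isLittleO (IsBigO.trans_isLittleO ?_ (isLittleO_id_smul_atTop _))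
  exact hsq.trans (isBigO_smul_const_self _ (by positivity))

theorem vasicek_theta_consistency_general (hθ : 0 < θ) (hc : c ≠ 0)
    (hX_int : LocallyIntegrableOn X (Ici 0))
    (hX_sq_int : LocallyIntegrableOn (fun t => X t ^ 2) (Ici 0))
    (hX : X ~[atTop] fun t => Real.exp (θ * t) * c) :
    (∀ᶠ T : ℝ in atTop,
        T * (∫ s in (0 : ℝ)..T, X s ^ 2) - (∫ s in (0 : ℝ)..T, X s) ^ 2 ≠ 0) ∧
    Tendsto
      (fun T : ℝ =>
        (1 / 2 * T * X T ^ 2 - X T * ∫ s in (0 : ℝ)..T, X s) /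
          (T * (∫ s in (0 : ℝ)..T, X s ^ 2) - (∫ s in (0 : ℝ)..T, X s) ^ 2))
      atTop (𝓝 θ) := by
  have hnum := isEquivalent_thetaEstimator_num hθ hc hX_int hX
  have hden := isEquivalent_thetaEstimator_den hθ hc hX_int hX_sq_int hX
  have hden_pos := hden.eventually_pos <| by
    filter_upwards [eventually_gt_atTop 0] with T hT
    positivity
  refine ⟨hden_pos.mono fun _ => ne_of_gt, (hnum.div hden).symm.tendsto_nhds ?_⟩
  refine tendsto_const_nhds.congr' ?_
  filter_upwards [eventually_gt_atTop 0] with T hT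
  rw [Pi.div_apply]
  field_simp

end Estimator

section Vasicek

variable {θ μ : ℝ} {ζ X : ℝ → ℝ} {ζinf : ℝ}

theorem continuousOn_vasicek (hζcont : ContinuousOn ζ (Ici 0))
    (hX : ∀ t, 0 ≤ t → X t = μ * (Real.exp (θ * t) - 1) + Real.exp (θ * t) * ζ t) :
    ContinuousOn X (Ici 0) :=
  ContinuousOn.congr (by fun_prop) hX

theorem isEquivalent_vasicek (hθ : 0 < θ) (hζlim : Tendsto ζ atTop (𝓝 ζinf))
    (hne : μ + ζinf ≠ 0)
    (hX : ∀ t, 0 ≤ t → X t = μ * (Real.exp (θ * t) - 1) + Real.exp (θ * t) * ζ t) :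
    X ~[atTop] fun t => Real.exp (θ * t) * (μ + ζinf) := by
  have hexp_neg : Tendsto (fun t => (Real.exp (θ * t))⁻¹) atTop (𝓝 0) :=
    (tendsto_exp_mul_atTop hθ).inv_tendsto_atTop
  have hfactor : Tendsto (fun t => μ - μ * (Real.exp (θ * t))⁻¹ + ζ t) atTop (𝓝 (μ + ζinf)) := by
    simpa only [mul_zero, sub_zero] using ((hexp_neg.const_mul μ).const_sub μ).add hζlim
  refine ((IsEquivalent.refl (u := fun t => Real.exp (θ * t))).mul
    ((isEquivalent_const_iff_tendsto hne).2 hfactor)).congr_left ?_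
  filter_upwards [eventually_ge_atTop 0] with t ht
  rw [hX t ht, Pi.mul_apply]
  field_simp

end Vasicek

theorem vasicek_theta_consistency (θ μ : ℝ) (hθ : 0 < θ)
    (ζ : ℝ → ℝ) (ζinf : ℝ)
    (hζcont : ContinuousOn ζ (Set.Ici 0)) (hζ0 : ζ 0 = 0)
    (hζlim : Filter.Tendsto ζ Filter.atTop (nhds ζinf))
    (hne : μ + ζinf ≠ 0)
    (X : ℝ → ℝ)
    (hX : ∀ t, 0 ≤ t → X t = μ * (Real.exp (θ * t) - 1) + Real.exp (θ * t) * ζ t) :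
    (∀ᶠ T : ℝ in Filter.atTop,
        T * (∫ s in (0:ℝ)..T, (X s) ^ 2) - (∫ s in (0:ℝ)..T, X s) ^ 2 ≠ 0) ∧
    Filter.Tendsto
      (fun T : ℝ =>
        ((1 / 2) * T * (X T) ^ 2 - X T * ∫ s in (0:ℝ)..T, X s) /
          (T * (∫ s in (0:ℝ)..T, (X s) ^ 2) - (∫ s in (0:ℝ)..T, X s) ^ 2))
      Filter.atTop (nhds θ) :=
  have hXcont := continuousOn_vasicek hζcont hX
  vasicek_theta_consistency_general hθ hne (hXcont.locallyIntegrableOn measurableSet_Ici)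
    ((hXcont.pow 2).locallyIntegrableOn measurableSet_Ici) (isEquivalent_vasicek hθ hζlim hne hX)
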